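/- arXiv:2110.06489 — 2 statements merged into one kernel-verified Lean document; each statement's English description precedes it below -/
import Mathlib

section
/- Let G = (V,E) be a connected, locally finite, simple graph and let u ∼ v be adjacent vertices. Let N_u be the set of neighbors of u other than v, and N_v the set of neighbors of v other than u. If |N_u| + |N_v| ≥ 3 and d(x, y) ≥ 3 for every x ∈ N_u and y ∈ N_v, then κ(u,v) < 0. -/
open SimpleGraph

variable {V : Type*}

/-- Combinatorial (unnormalized) graph Laplacian. -/
def lapl (G : SimpleGraph V) [G.LocallyFinite] (f : V → ℝ) (x : V) : ℝ :=
  ∑ y ∈ G.neighborFinset x, (f y - f x)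

/-- Lin-Lu-Yau-Ollivier Ricci curvature (limit-free definition):
`κ(u,v) = inf { Δf(u) − Δf(v) : f 1-Lipschitz w.r.t. graph distance, f v − f u = 1 }`. -/
noncomputable def ricci (G : SimpleGraph V) [G.LocallyFinite] (u v : V) : ℝ :=
  sInf { r : ℝ | ∃ f : V → ℝ,
    (∀ x y : V, |f x - f y| ≤ (G.dist x y : ℝ)) ∧ f v - f u = 1 ∧
    r = lapl G f u - lapl G f v }

/-- Nonnegative Ricci curvature on every edge. -/
def NonnegRicci (G : SimpleGraph V) [G.LocallyFinite] : Prop :=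
  ∀ u v : V, G.Adj u v → 0 ≤ ricci G u v
/-- Along an edge, a `1`-Lipschitz function changes by at most one. -/
lemma abs_sub_le_one_of_adj {G : SimpleGraph V} {f : V → ℝ}
    (hf : ∀ x y : V, |f x - f y| ≤ (G.dist x y : ℝ)) {x y : V} (h : G.Adj x y) :
    |f x - f y| ≤ 1 := by
  simpa [dist_eq_one_iff_adj.mpr h] using hf x y

/-- The Laplacian of a `1`-Lipschitz function is bounded by the degree. -/
lemma abs_lapl_le_degree {G : SimpleGraph V} [G.LocallyFinite] {f : V → ℝ}
    (hf : ∀ x y : V, |f x - f y| ≤ (G.dist x y : ℝ)) (x : V) :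
    |lapl G f x| ≤ G.degree x := by
  calc |lapl G f x| ≤ ∑ y ∈ G.neighborFinset x, |f y - f x| := Finset.abs_sum_le_sum_abs _ _
    _ ≤ ∑ _y ∈ G.neighborFinset x, (1 : ℝ) := Finset.sum_le_sum fun y hy =>
        abs_sub_le_one_of_adj hf ((G.mem_neighborFinset x y).mp hy).symm
    _ = G.degree x := by simp

/-- Every admissible test function bounds the Ricci curvature from above. -/
lemma ricci_le {G : SimpleGraph V} [G.LocallyFinite] {u v : V} {f : V → ℝ}
    (hf : ∀ x y : V, |f x - f y| ≤ (G.dist x y : ℝ)) (huv : f v - f u = 1) :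
    ricci G u v ≤ lapl G f u - lapl G f v := by
  refine csInf_le ⟨-G.degree u - G.degree v, ?_⟩ ⟨f, hf, huv, rfl⟩
  rintro r ⟨g, hg, -, rfl⟩
  linarith [(abs_le.mp (abs_lapl_le_degree hg u)).1, (abs_le.mp (abs_lapl_le_degree hg v)).2]

/-- The lower envelope of the cones `x ↦ d(x, y) + c y`, `y ∈ s`, is `1`-Lipschitz. -/
lemma abs_inf'_dist_add_sub_le {G : SimpleGraph V} (hconn : G.Connected) {s : Finset V}
    (hs : s.Nonempty) (c : V → ℝ) (x y : V) :
    |s.inf' hs (fun z => (G.dist x z : ℝ) + c z) - s.inf' hs (fun z => (G.dist y z : ℝ) + c z)|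
      ≤ G.dist x y := by
  have key (a b : V) : s.inf' hs (fun z => (G.dist a z : ℝ) + c z) - G.dist a b
      ≤ s.inf' hs (fun z => (G.dist b z : ℝ) + c z) := by
    refine Finset.le_inf' _ _ fun z hz => ?_
    have h₁ := Finset.inf'_le (fun z => (G.dist a z : ℝ) + c z) hz
    have h₂ : (G.dist a z : ℝ) ≤ G.dist a b + G.dist b z := by
      exact_mod_cast hconn.dist_triangle
    linarith
  have h₁ := key x y
  have h₂ := key y x
  rw [G.dist_comm (u := y)] at h₂
  exact abs_le.mpr ⟨by linarith, by linarith⟩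

/-- Let `u ∼ v` in a connected, locally finite simple graph, let `N_u`
be the neighbors of `u` other than `v` and `N_v` the neighbors of `v` other than `u`.
If `|N_u| + |N_v| ≥ 3` and every vertex of `N_u` is at distance at least 3 from every
vertex of `N_v`, then `κ(u,v) < 0`. -/
theorem ricci_neg_of_far_neighbors [DecidableEq V] (G : SimpleGraph V) [G.LocallyFinite]
    (hconn : G.Connected) (u v : V) (huv : G.Adj u v)
    (hcard : 3 ≤ ((G.neighborFinset u).erase v).card + ((G.neighborFinset v).erase u).card)
    (hfar : ∀ x ∈ (G.neighborFinset u).erase v, ∀ y ∈ (G.neighborFinset v).erase u,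
      3 ≤ G.dist x y) :
    ricci G u v < 0 := by
  have hS : (insert u ((G.neighborFinset u).erase v)).Nonempty := Finset.insert_nonempty _ _
  let c : V → ℝ := fun z => if z = u then 0 else -1
  have hcu : c u = 0 := if_pos rfl
  have hc {z : V} (hz : z ∈ (G.neighborFinset u).erase v) : c z = -1 := by
    refine if_neg ?_
    rintro rfl
    simp at hz
  let f : V → ℝ := fun x =>
    (insert u ((G.neighborFinset u).erase v)).inf' hS fun z => (G.dist x z : ℝ) + c z
  have hf (x y : V) : |f x - f y| ≤ (G.dist x y : ℝ) := abs_inf'_dist_add_sub_le hconn hS c x y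
  have f_le_dist (x : V) : f x ≤ G.dist x u := by
    simpa [hcu] using Finset.inf'_le (fun z => (G.dist x z : ℝ) + c z)
      (Finset.mem_insert_self u ((G.neighborFinset u).erase v))
  have le_f {x : V} {n : ℕ} (hu : n ≤ G.dist x u)
      (hN : ∀ z ∈ (G.neighborFinset u).erase v, n + 1 ≤ G.dist x z) : (n : ℝ) ≤ f x := by
    refine Finset.le_inf' _ _ fun z hz => ?_
    rcases Finset.mem_insert.mp hz with rfl | hz
    · simpa [hcu] using hu
    · have h : (n : ℝ) + 1 ≤ G.dist x z := by exact_mod_cast hN z hz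
      rw [hc hz]
      linarith
  have one_lt_dist {x y : V} (hne : x ≠ y) (hadj : ¬ G.Adj x y) : 2 ≤ G.dist x y := by
    have h₀ := hconn.pos_dist_of_ne hne
    have h₁ : G.dist x y ≠ 1 := fun h => hadj (dist_eq_one_iff_adj.mp h)
    omega
  have not_mem {z : V} (hu : z ∈ (G.neighborFinset u).erase v)
      (hv : z ∈ (G.neighborFinset v).erase u) : False := by
    simpa using hfar z hu z hv
  have hfu : f u = 0 := by
    refine le_antisymm (by simpa using f_le_dist u) ?_
    refine mod_cast le_f (n := 0) (Nat.zero_le _) fun z hz => ?_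
    have hz : G.Adj u z := by simpa using Finset.mem_of_mem_erase hz
    exact hconn.pos_dist_of_ne hz.ne
  have hdist : G.dist v u = 1 := dist_eq_one_iff_adj.mpr huv.symm
  have hfv : f v = 1 := by
    refine le_antisymm (by simpa [hdist] using f_le_dist v) ?_
    refine mod_cast le_f (n := 1) hdist.ge fun z hz => ?_
    refine one_lt_dist (Finset.ne_of_mem_erase hz).symm fun hvz => not_mem hz ?_
    have huz : G.Adj u z := by simpa using Finset.mem_of_mem_erase hz
    simp [hvz, huz.ne']
  have hfNu : ∀ x ∈ (G.neighborFinset u).erase v, f x - f u ≤ -1 := by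
    intro x hx
    have h : f x ≤ G.dist x x + c x := Finset.inf'_le (fun z => (G.dist x z : ℝ) + c z)
      (Finset.mem_insert_of_mem hx)
    simpa [hfu, hc hx] using h
  have hfNv : ∀ y ∈ (G.neighborFinset v).erase u, 1 ≤ f y - f v := by
    intro y hy
    have hvy : G.Adj v y := by simpa using Finset.mem_of_mem_erase hy
    have h : ((2 : ℕ) : ℝ) ≤ f y := by
      refine le_f (one_lt_dist (Finset.ne_of_mem_erase hy) fun hyu => not_mem ?_ hy) ?_
      · simp [hyu.symm, hvy.ne']
      · intro z hz
        rw [G.dist_comm]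
        exact hfar z hz y hy
    push_cast at h
    linarith
  have hlu : lapl G f u ≤ 1 - ((G.neighborFinset u).erase v).card := by
    have h := Finset.sum_le_card_nsmul _ _ _ hfNu
    rw [lapl, ← Finset.add_sum_erase _ _ ((G.mem_neighborFinset u v).mpr huv)]
    rw [nsmul_eq_mul] at h
    linarith
  have hlv : ((G.neighborFinset v).erase u).card - 1 ≤ lapl G f v := by
    have h := Finset.card_nsmul_le_sum _ _ _ hfNv
    rw [lapl, ← Finset.add_sum_erase _ _ ((G.mem_neighborFinset v u).mpr huv.symm)]
    rw [nsmul_eq_mul] at h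
    linarith
  have hcard' : (3 : ℝ) ≤ ((G.neighborFinset u).erase v).card
      + ((G.neighborFinset v).erase u).card := by exact_mod_cast hcard
  linarith [ricci_le hf (by rw [hfu, hfv]; norm_num : f v - f u = 1)]
end

section
/- Let G = (V,E) be a connected, locally finite, simple graph and let u ∼ v be adjacent vertices with deg(u) = 2 and deg(v) = 3. Let a be the neighbor of u other than v, and let b, c be the two neighbors of v other than u, and assume a ∉ {b, c}. Then κ(u,v) < 0 if and only if d(a,b) = 3 and d(a,c) = 3. Moreover, if in addition a is not adjacent to v, then κ(u,v) = 2 − min(d(a,b), d(a,c)). -/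
open SimpleGraph

variable {V : Type*}

/-- The distance to a fixed vertex of a connected graph is `1`-Lipschitz. -/
theorem abs_dist_sub_dist_le {G : SimpleGraph V} (hconn : G.Connected) (p x y : V) :
    |(G.dist p x : ℝ) - G.dist p y| ≤ G.dist x y := by
  have h₁ : G.dist p x ≤ G.dist p y + G.dist y x := hconn.dist_triangle
  have h₂ : G.dist p y ≤ G.dist p x + G.dist x y := hconn.dist_triangle
  rw [G.dist_comm (u := y) (v := x)] at h₁
  rw [abs_le]
  constructor <;> linarith [(by exact_mod_cast h₁ : (G.dist p x : ℝ) ≤ G.dist p y + G.dist x y),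
    (by exact_mod_cast h₂ : (G.dist p y : ℝ) ≤ G.dist p x + G.dist x y)]

/-- The minimum of two shifted distance functions is `1`-Lipschitz. -/
theorem abs_min_dist_sub_min_dist_le {G : SimpleGraph V} (hconn : G.Connected) (p q : V)
    (t : ℝ) (x y : V) :
    |min (G.dist p x + t) (G.dist q x : ℝ) - min (G.dist p y + t) (G.dist q y : ℝ)|
      ≤ G.dist x y := by
  refine (abs_min_sub_min_le_max _ _ _ _).trans (max_le ?_ ?_)
  · rw [add_sub_add_right_eq_sub]
    exact abs_dist_sub_dist_le hconn p x y
  · exact abs_dist_sub_dist_le hconn q x y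

theorem neighborFinset_eq_pair {G : SimpleGraph V} [G.LocallyFinite] [DecidableEq V] {u v a : V}
    (hdu : G.degree u = 2) (huv : G.Adj u v) (hua : G.Adj u a) (hav : a ≠ v) :
    G.neighborFinset u = {a, v} := by
  refine (Finset.eq_of_subset_of_card_le ?_ ?_).symm
  · simp [Finset.insert_subset_iff, huv, hua]
  · rw [Finset.card_pair hav, G.card_neighborFinset_eq_degree, hdu]

theorem neighborFinset_eq_triple {G : SimpleGraph V} [G.LocallyFinite] [DecidableEq V]
    {v u b c : V} (hdv : G.degree v = 3) (hvu : G.Adj v u) (hvb : G.Adj v b) (hvc : G.Adj v c)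
    (hub : u ≠ b) (huc : u ≠ c) (hbc : b ≠ c) :
    G.neighborFinset v = {u, b, c} := by
  refine (Finset.eq_of_subset_of_card_le ?_ ?_).symm
  · simp [Finset.insert_subset_iff, hvu, hvb, hvc]
  · rw [Finset.card_eq_three.2 ⟨u, b, c, hub, huc, hbc, rfl⟩, G.card_neighborFinset_eq_degree,
      hdv]

/-- Two distinct, non-adjacent vertices with a common neighbor are at distance two. -/
theorem dist_eq_two_of_common_adj {G : SimpleGraph V} (hconn : G.Connected) {x y z : V}
    (hxy : G.Adj x y) (hyz : G.Adj y z) (hne : x ≠ z) (hxz : ¬ G.Adj x z) : G.dist x z = 2 := by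
  have h : G.dist x z ≤ G.dist x y + G.dist y z := hconn.dist_triangle
  have h₀ := hconn.pos_dist_of_ne hne
  have h₁ : G.dist x z ≠ 1 := fun h => hxz (dist_eq_one_iff_adj.1 h)
  rw [dist_eq_one_iff_adj.2 hxy, dist_eq_one_iff_adj.2 hyz] at h
  omega

/-- Let `u ∼ v` in a connected, locally finite simple graph with
`deg u = 2`, `deg v = 3`, where `a` is the neighbor of `u` other than `v`, and `b, c` are
the two neighbors of `v` other than `u`, with `a ∉ {b, c}`. Then `κ(u,v) < 0` iff
`d(a,b) = 3` and `d(a,c) = 3`; and if moreover `a` is not adjacent to `v`, then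
`κ(u,v) = 2 − min (d(a,b)) (d(a,c))`. -/
theorem ricci_two_three_formula (G : SimpleGraph V) [G.LocallyFinite]
    (hconn : G.Connected) (u v a b c : V) (huv : G.Adj u v)
    (hdu : G.degree u = 2) (hdv : G.degree v = 3)
    (hua : G.Adj u a) (hav : a ≠ v)
    (hvb : G.Adj v b) (hvc : G.Adj v c) (hbc : b ≠ c) (hbu : b ≠ u) (hcu : c ≠ u)
    (hab : a ≠ b) (hac : a ≠ c) :
    (ricci G u v < 0 ↔ G.dist a b = 3 ∧ G.dist a c = 3) ∧
      (¬ G.Adj a v →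
        ricci G u v = 2 - (min (G.dist a b) (G.dist a c) : ℕ)) := by
  classical
  have hNu := neighborFinset_eq_pair hdu huv hua hav
  have hNv := neighborFinset_eq_triple hdv huv.symm hvb hvc hbu.symm hcu.symm hbc
  have hadj_u (x : V) : G.Adj u x ↔ x = a ∨ x = v := by
    rw [← G.mem_neighborFinset, hNu]
    simp
  have hadj_v (x : V) : G.Adj v x ↔ x = u ∨ x = b ∨ x = c := by
    rw [← G.mem_neighborFinset, hNv]
    simp
  have hlap (f : V → ℝ) : lapl G f u - lapl G f v =
      f a - f b - f c + 4 * (f v - f u) + f u := by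
    rw [lapl, lapl, hNu, hNv, Finset.sum_pair hav, Finset.sum_insert (by simp [hbu.symm, hcu.symm]),
      Finset.sum_pair hbc]
    ring
  have hdua : G.dist u a = 1 := dist_eq_one_iff_adj.2 hua
  have hduv : G.dist u v = 1 := dist_eq_one_iff_adj.2 huv
  have hdvb : G.dist v b = 1 := dist_eq_one_iff_adj.2 hvb
  have hdvc : G.dist v c = 1 := dist_eq_one_iff_adj.2 hvc
  have hdub : G.dist u b = 2 := dist_eq_two_of_common_adj hconn huv hvb hbu.symm
    (by simp [hadj_u, hab.symm, hvb.ne'])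
  have hduc : G.dist u c = 2 := dist_eq_two_of_common_adj hconn huv hvc hcu.symm
    (by simp [hadj_u, hac.symm, hvc.ne'])
  have hdav : G.dist a v = 2 := dist_eq_two_of_common_adj hconn hua.symm huv hav
    (by simp [G.adj_comm a v, hadj_v, hua.ne', hab, hac])
  have hdab : G.dist a b ≤ 3 := by
    have h : G.dist a b ≤ G.dist a v + G.dist v b := hconn.dist_triangle
    omega
  have hdac : G.dist a c ≤ 3 := by
    have h : G.dist a c ≤ G.dist a v + G.dist v c := hconn.dist_triangle
    omega
  have hdab₀ := hconn.pos_dist_of_ne hab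
  have hdac₀ := hconn.pos_dist_of_ne hac
  obtain ⟨m, hm⟩ : ∃ m, m = min (G.dist a b) (G.dist a c) := ⟨_, rfl⟩
  have hmb : (m : ℝ) ≤ G.dist a b := by exact_mod_cast (by omega : m ≤ G.dist a b)
  have hmc : (m : ℝ) ≤ G.dist a c := by exact_mod_cast (by omega : m ≤ G.dist a c)
  have hm₁ : (1 : ℝ) ≤ m := by exact_mod_cast (by omega : 1 ≤ m)
  have hm₃ : (m : ℝ) ≤ 3 := by exact_mod_cast (by omega : m ≤ 3)
  have key : ricci G u v = 2 - (m : ℝ) := by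
    refine IsLeast.csInf_eq ⟨?_, ?_⟩
    · have ea : min ((G.dist a a : ℝ) + (2 - m)) (G.dist u a) = 2 - m := by
        rw [dist_self, hdua, min_eq_left] <;> push_cast <;> linarith
      have eu : min ((G.dist a u : ℝ) + (2 - m)) (G.dist u u) = 0 := by
        rw [dist_self, G.dist_comm, hdua, min_eq_right] <;> push_cast <;> linarith
      have ev : min ((G.dist a v : ℝ) + (2 - m)) (G.dist u v) = 1 := by
        rw [hdav, hduv, min_eq_right] <;> push_cast <;> linarith
      have eb : min ((G.dist a b : ℝ) + (2 - m)) (G.dist u b) = 2 := by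
        rw [hdub, min_eq_right] <;> push_cast <;> linarith
      have ec : min ((G.dist a c : ℝ) + (2 - m)) (G.dist u c) = 2 := by
        rw [hduc, min_eq_right] <;> push_cast <;> linarith
      refine ⟨fun x => min (G.dist a x + (2 - m)) (G.dist u x),
        abs_min_dist_sub_min_dist_le hconn a u _, ?_, ?_⟩
      · simp only [eu, ev]
        norm_num
      · rw [hlap]
        simp only [ea, eb, ec, eu, ev]
        ring
    · rintro r ⟨f, hf, hfuv, rfl⟩
      rw [hlap]
      have hb := (abs_le.1 (hf b v)).2
      have hc := (abs_le.1 (hf c v)).2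
      rw [G.dist_comm, hdvb] at hb
      rw [G.dist_comm, hdvc] at hc
      have hb' := (abs_le.1 (hf a b)).1
      have hc' := (abs_le.1 (hf a c)).1
      push_cast at hb hc
      rcases min_choice (G.dist a b) (G.dist a c) with h | h <;> rw [← hm] at h <;>
        rw [h] <;> linarith
  rw [← hm, key]
  refine ⟨?_, fun _ => rfl⟩
  rw [sub_neg, (by norm_cast : (2 : ℝ) < m ↔ 2 < m)]
  omega
end
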